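/- arXiv:1904.07796 — 2 statements merged into one kernel-verified Lean document; each statement's English description precedes it below -/
import Mathlib

section
/- Let m ≥ 3 and let u be a nonempty cyclically reduced word in the letters a^{±1}, b^{±1} that represents the identity element of the dihedral Artin group A_m = ⟨a, b | p_m(a,b) = p_m(b,a)⟩. Then, possibly after replacing u by one of its cyclic permutations, u contains two disjoint (non-overlapping) subwords w₁ and w₂, each equal to one of the words p_m(a,b), p_m(a,b)⁻¹, p_m(b,a), p_m(b,a)⁻¹, such that no two of the letters of w₁ and w₂ lie in the same syllable of u, nor in the same syllable of any cyclic permutation of u. -/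
/-- The alternating word of length `m` starting with the generator `x`, with all
exponents `+1`, as a list of letters (generator, sign). With `false = a` and
`true = b`, `altL false m` is the word `p_m(a,b) = aba⋯` and `altL true m` is
`p_m(b,a) = bab⋯`. -/
def altL : Bool → ℕ → List (Bool × Bool)
  | _, 0 => []
  | x, n + 1 => (x, true) :: altL (!x) n

/-- The formal inverse of a word: reverse the word and invert each letter. -/
def invL (L : List (Bool × Bool)) : List (Bool × Bool) :=
  (L.map fun p => (p.1, !p.2)).reverse

/-- The four words `p_m(a,b)`, `p_m(a,b)⁻¹`, `p_m(b,a)`, `p_m(b,a)⁻¹`. -/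
def pmWords (m : ℕ) : List (List (Bool × Bool)) :=
  [altL false m, invL (altL false m), altL true m, invL (altL true m)]

/-- Two consecutive letters do not cancel: it is not the case that they have the
same generator and opposite signs. -/
def NoCancel (p q : Bool × Bool) : Prop := ¬(p.1 = q.1 ∧ p.2 ≠ q.2)

/-- A word is cyclically reduced iff each of its cyclic permutations is reduced. -/
def CyclicallyReduced (u : List (Bool × Bool)) : Prop :=
  ∀ k : ℕ, List.Chain' NoCancel (u.rotate k)

/-- The generator of the letter of `v` at cyclic position `i`. -/
def cgen (v : List (Bool × Bool)) (i : ℕ) : Bool :=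
  (v.getD (i % v.length) (false, true)).1

/-- There is a cyclic arc of `v` from position `p` forward to position `q` all of
whose letters have the same generator. -/
def ConstArc (v : List (Bool × Bool)) (p q : ℕ) : Prop :=
  ∃ d : ℕ, d < v.length ∧ q % v.length = (p + d) % v.length ∧
    ∀ t ≤ d, cgen v (p + t) = cgen v p

/-- Positions `p` and `q` lie in a common syllable of `v` or of some cyclic
permutation of `v`: some constant-generator cyclic arc joins them. -/
def SameCyclicSyllable (v : List (Bool × Bool)) (p q : ℕ) : Prop :=
  ConstArc v p q ∨ ConstArc v q p

namespace DihedralArtin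

/-- The alternating word of length `n` starting with the generator `x`, all of whose letters
have sign `s`. -/
def altWord : Bool → Bool → ℕ → List (Bool × Bool)
  | _, _, 0 => []
  | x, s, n + 1 => (x, s) :: altWord (!x) s n

/-- A sign as an integer. -/
def sgn (s : Bool) : ℤ := if s then 1 else -1

/-- The exponent sum of a word. -/
def exponentSum (v : List (Bool × Bool)) : ℤ := (v.map fun p => sgn p.2).sum

/-- No subword of `v` is an alternating word of length `m` of constant sign. -/
def Windowless (m : ℕ) (v : List (Bool × Bool)) : Prop :=
  ∀ i x s, (v.drop i).take m ≠ altWord x s m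

section Words

lemma length_altWord (x s : Bool) (n : ℕ) : (altWord x s n).length = n := by
  induction n generalizing x with
  | zero => rfl
  | succ n ih => simp [altWord, ih]

lemma altWord_succ_eq_append (x s : Bool) (n : ℕ) :
    altWord x s (n + 1) = altWord x s n ++ [(xor x n.bodd, s)] := by
  induction n generalizing x with
  | zero => simp [altWord]
  | succ n ih =>
    rw [altWord, ih, altWord]
    cases x <;> simp

lemma getElem_altWord (x s : Bool) (n i : ℕ) (h : i < (altWord x s n).length) :
    (altWord x s n)[i] = (xor x i.bodd, s) := by
  induction n generalizing x i with
  | zero => simp [altWord] at h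
  | succ n ih =>
    cases i with
    | zero => simp [altWord]
    | succ i =>
      simp only [altWord, List.getElem_cons_succ]
      rw [ih]
      cases x <;> simp

lemma altL_eq_altWord (x : Bool) (n : ℕ) : altL x n = altWord x true n := by
  induction n generalizing x with
  | zero => rfl
  | succ n ih => simp [altL, altWord, ih]

lemma invL_altL (x : Bool) (n : ℕ) : invL (altL x n) = altWord (xor x (!n.bodd)) false n := by
  rw [altL_eq_altWord]
  induction n with
  | zero => rfl
  | succ n ih =>
    rw [altWord_succ_eq_append, invL, List.map_append, List.reverse_append]
    rw [invL] at ih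
    rw [ih]
    cases x <;> cases h : n.bodd <;> simp [altWord, h]

lemma mem_pmWords_iff (m : ℕ) (w : List (Bool × Bool)) :
    w ∈ pmWords m ↔ ∃ x s, w = altWord x s m := by
  rw [pmWords, invL_altL, invL_altL, altL_eq_altWord, altL_eq_altWord]
  simp only [List.mem_cons, List.not_mem_nil, or_false, Bool.exists_bool]
  cases m.bodd <;> simp <;> tauto

lemma sgn_not (s : Bool) : sgn (!s) = -sgn s := by cases s <;> rfl

lemma sgn_mul_self (s : Bool) : sgn s * sgn s = 1 := by cases s <;> rfl

lemma exponentSum_append (v w : List (Bool × Bool)) :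
    exponentSum (v ++ w) = exponentSum v + exponentSum w := by
  simp [exponentSum]

lemma exponentSum_replicate (k : ℕ) (x s : Bool) :
    exponentSum (List.replicate k (x, s)) = k * sgn s := by
  simp [exponentSum]

lemma exponentSum_altWord (x s : Bool) (n : ℕ) : exponentSum (altWord x s n) = n * sgn s := by
  induction n generalizing x with
  | zero => simp [exponentSum, altWord]
  | succ n ih =>
    have := ih (!x)
    simp only [exponentSum, altWord, List.map_cons, List.sum_cons] at this ⊢
    rw [this]; push_cast; ring

end Words

section States

variable {R : Type*} [AddCommGroup R]

/-- A list `[c₀, …, cᵣ]` encodes the element `τ^c₀ σ τ^c₁ σ ⋯ σ τ^cᵣ` of the free product of a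
copy of `R` with the group of order two generated by `σ`; it is a normal form when the inner
entries do not vanish. -/
def IsNormalForm (L : List R) : Prop := L ≠ [] ∧ ∀ c ∈ L.tail.dropLast, c ≠ 0

/-- Left multiplication by `τ^r` on normal forms. -/
def shift (r : R) : List R → List R
  | [] => []
  | c :: t => (r + c) :: t

lemma IsNormalForm.shift {L : List R} (r : R) (h : IsNormalForm L) :
    IsNormalForm (shift r L) := by
  cases L with
  | nil => exact h
  | cons c t => exact ⟨by simp [DihedralArtin.shift], h.2⟩

lemma shift_shift (r r' : R) (L : List R) : shift r (shift r' L) = shift (r + r') L := by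
  cases L <;> simp [shift, add_assoc]

/-- The permutation of the set of normal forms induced by `τ^r`. -/
def tau (r : R) : Equiv.Perm {L : List R // IsNormalForm L} where
  toFun L := ⟨shift r L.1, L.2.shift r⟩
  invFun L := ⟨shift (-r) L.1, L.2.shift (-r)⟩
  left_inv L := Subtype.ext (by
    simp only [shift_shift]
    cases L.1 <;> simp [shift])
  right_inv L := Subtype.ext (by
    simp only [shift_shift]
    cases L.1 <;> simp [shift])

lemma tau_mul (r r' : R) : tau r * tau r' = tau (r + r') :=
  Equiv.ext fun L => Subtype.ext (shift_shift r r' L.1)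

lemma tau_zero : tau (0 : R) = 1 :=
  Equiv.ext fun L => Subtype.ext (by
    change shift 0 L.1 = L.1
    cases L.1 <;> simp [shift])

lemma tau_inv (r : R) : (tau r)⁻¹ = tau (-r) :=
  inv_eq_of_mul_eq_one_left (by rw [tau_mul, neg_add_cancel, tau_zero])

variable [DecidableEq R]

/-- Left multiplication by `σ` on normal forms. -/
def involute : List R → List R
  | [] => []
  | [c] => [0, c]
  | c :: d :: t => if c = 0 then d :: t else 0 :: c :: d :: t

lemma involute_cons_zero (c : R) (t : List R) : involute (0 :: c :: t) = c :: t := by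
  simp [involute]

lemma involute_cons_of_ne (c : R) (t : List R) (h : c ≠ 0) :
    involute (c :: t) = 0 :: c :: t := by
  cases t <;> simp [involute, h]

lemma IsNormalForm.involute {L : List R} (h : IsNormalForm L) :
    IsNormalForm (involute L) := by
  obtain ⟨h0, h1⟩ := h
  match L with
  | [] => exact absurd rfl h0
  | [c] => simp [DihedralArtin.involute, IsNormalForm]
  | c :: d :: t =>
    simp only [DihedralArtin.involute]
    split_ifs with hc
    · refine ⟨by simp, fun x hx => h1 x ?_⟩
      cases t with
      | nil => simp at hx
      | cons e t => simpa using Or.inr hx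
    · refine ⟨by simp, fun x hx => ?_⟩
      simp only [List.tail_cons, List.dropLast_cons_cons, List.mem_cons] at hx
      rcases hx with rfl | hx
      · exact hc
      · exact h1 x hx

lemma involute_involute {L : List R} (h : IsNormalForm L) : involute (involute L) = L := by
  obtain ⟨h0, h1⟩ := h
  match L with
  | [] => rfl
  | [c] => simp [involute]
  | [c, d] => by_cases hc : c = 0 <;> simp [involute, hc]
  | c :: d :: e :: t =>
    have hd : d ≠ 0 := h1 d (by simp)
    by_cases hc : c = 0 <;> simp [involute, hc, hd]

variable (R) in
/-- The permutation of the set of normal forms induced by `σ`. -/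
def sigma : Equiv.Perm {L : List R // IsNormalForm L} where
  toFun L := ⟨involute L.1, L.2.involute⟩
  invFun L := ⟨involute L.1, L.2.involute⟩
  left_inv L := Subtype.ext (involute_involute L.2)
  right_inv L := Subtype.ext (involute_involute L.2)

lemma sigma_mul_self : sigma R * sigma R = 1 :=
  Equiv.ext fun L => Subtype.ext (involute_involute L.2)

lemma sigma_inv : (sigma R)⁻¹ = sigma R := inv_eq_of_mul_eq_one_left sigma_mul_self

end States

section Action

variable (m : ℕ)

/-- The action of the letters on normal forms over `ZMod m`: `a` acts as `τσ` and `b` as `στ`. -/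
def letterPerm (p : Bool × Bool) : Equiv.Perm {L : List (ZMod m) // IsNormalForm L} :=
  if p.1 = p.2 then sigma (ZMod m) * tau ((sgn p.2 : ℤ) : ZMod m)
  else tau ((sgn p.2 : ℤ) : ZMod m) * sigma (ZMod m)

/-- The action of words on normal forms over `ZMod m`. -/
def wordPerm (v : List (Bool × Bool)) : Equiv.Perm {L : List (ZMod m) // IsNormalForm L} :=
  (v.map (letterPerm m)).prod

/-- The normal form of the image of a word in the free product. -/
def state (v : List (Bool × Bool)) : List (ZMod m) :=
  (wordPerm m v ⟨[0], by simp [IsNormalForm]⟩).1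

lemma wordPerm_append (v w : List (Bool × Bool)) :
    wordPerm m (v ++ w) = wordPerm m v * wordPerm m w := by
  simp [wordPerm]

lemma state_nil : state m [] = [0] := rfl

lemma state_cons (x s : Bool) (v : List (Bool × Bool)) :
    state m ((x, s) :: v) =
      if x = s then involute (shift ((sgn s : ℤ) : ZMod m) (state m v))
      else shift ((sgn s : ℤ) : ZMod m) (involute (state m v)) := by
  by_cases h : x = s <;> simp [state, wordPerm, letterPerm, h, sigma, tau]

lemma letterPerm_not (x s : Bool) : letterPerm m (x, !s) = (letterPerm m (x, s))⁻¹ := by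
  cases x <;> cases s <;> simp [letterPerm, sgn, tau_inv, sigma_inv]

lemma wordPerm_altWord (x s : Bool) (n : ℕ) :
    wordPerm m (altWord x s n) =
      if x = s then sigma (ZMod m) * tau ((n * sgn s : ℤ) : ZMod m) * sigma (ZMod m) ^ (n + 1)
      else tau ((n * sgn s : ℤ) : ZMod m) * sigma (ZMod m) ^ n := by
  induction n generalizing x with
  | zero => simp [altWord, wordPerm, tau_zero, sigma_mul_self]
  | succ n ih =>
    have h := ih (!x)
    rw [wordPerm] at h
    rw [altWord, wordPerm, List.map_cons, List.prod_cons, h]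
    have e : tau ((((n + 1 : ℕ) : ℤ) * sgn s : ℤ) : ZMod m) =
        tau ((sgn s : ℤ) : ZMod m) * tau ((n * sgn s : ℤ) : ZMod m) := by
      rw [tau_mul]; congr 1; push_cast; ring
    have e2 : sigma (ZMod m) ^ (n + 1 + 1) = sigma (ZMod m) ^ n := by
      rw [pow_succ, pow_succ, mul_assoc, sigma_mul_self, mul_one]
    rw [e, e2]
    cases x <;> cases s <;> simp [letterPerm, mul_assoc] <;>
      simp only [← mul_assoc, sigma_mul_self, one_mul]

lemma wordPerm_altWord_self (x s : Bool) : wordPerm m (altWord x s m) = sigma (ZMod m) ^ m := by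
  have h : tau ((m * sgn s : ℤ) : ZMod m) = 1 := by simp [tau_zero]
  rw [wordPerm_altWord, h]
  split_ifs
  · rw [mul_one, pow_succ', ← mul_assoc, sigma_mul_self, one_mul]
  · rw [one_mul]

lemma sigma_mul_letterPerm (x s : Bool) :
    sigma (ZMod m) * letterPerm m (x, s) = letterPerm m (!x, s) * sigma (ZMod m) := by
  cases x <;> cases s <;> simp [letterPerm, mul_assoc, sigma_mul_self] <;>
    simp only [← mul_assoc, sigma_mul_self, one_mul]

lemma letterPerm_mul_sigma_pow (x s : Bool) (n : ℕ) :
    letterPerm m (x, s) * sigma (ZMod m) ^ n =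
      sigma (ZMod m) ^ n * letterPerm m (xor x n.bodd, s) := by
  induction n generalizing x with
  | zero => simp
  | succ n ih =>
    have h := sigma_mul_letterPerm m (!x) s
    rw [Bool.not_not] at h
    rw [pow_succ', ← mul_assoc, ← h, mul_assoc, ih, mul_assoc]
    cases x <;> simp

lemma wordPerm_eq_one_of_mem {v : List (Bool × Bool)}
    (h : FreeGroup.mk v ∈ Subgroup.normalClosure
      {FreeGroup.mk (altL false m) * (FreeGroup.mk (altL true m))⁻¹}) :
    wordPerm m v = 1 := by
  have key : ∀ w, FreeGroup.lift (fun x => letterPerm m (x, true)) (FreeGroup.mk w) =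
      wordPerm m w := fun w => by
    rw [FreeGroup.lift_mk, wordPerm]
    congr 2
    funext p
    obtain ⟨x, s⟩ := p
    cases s
    · exact (letterPerm_not m x true).symm
    · rfl
  have hle : Subgroup.normalClosure
      {FreeGroup.mk (altL false m) * (FreeGroup.mk (altL true m))⁻¹} ≤
      (FreeGroup.lift (fun x => letterPerm m (x, true))).ker := by
    refine Subgroup.normalClosure_le_normal (Set.singleton_subset_iff.2 ?_)
    rw [SetLike.mem_coe, MonoidHom.mem_ker, map_mul, map_inv, key, key, altL_eq_altWord,
      altL_eq_altWord, wordPerm_altWord_self, wordPerm_altWord_self, mul_inv_cancel]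
  rw [← key]
  exact hle h

lemma exponentSum_eq_zero_of_mem {v : List (Bool × Bool)}
    (h : FreeGroup.mk v ∈ Subgroup.normalClosure
      {FreeGroup.mk (altL false m) * (FreeGroup.mk (altL true m))⁻¹}) :
    exponentSum v = 0 := by
  have key : ∀ w, FreeGroup.lift (fun _ : Bool => Multiplicative.ofAdd (1 : ℤ))
      (FreeGroup.mk w) = Multiplicative.ofAdd (exponentSum w) := fun w => by
    rw [FreeGroup.lift_mk, exponentSum, ofAdd_list_prod, List.map_map]
    congr 2
    funext p
    obtain ⟨x, s⟩ := p
    cases s <;> rfl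
  have hle : Subgroup.normalClosure
      {FreeGroup.mk (altL false m) * (FreeGroup.mk (altL true m))⁻¹} ≤
      (FreeGroup.lift (fun _ : Bool => Multiplicative.ofAdd (1 : ℤ))).ker := by
    refine Subgroup.normalClosure_le_normal (Set.singleton_subset_iff.2 ?_)
    rw [SetLike.mem_coe, MonoidHom.mem_ker, map_mul, map_inv, key, key, altL_eq_altWord,
      altL_eq_altWord, exponentSum_altWord, exponentSum_altWord, mul_inv_cancel]
  have := hle h
  rw [MonoidHom.mem_ker, key] at this
  exact Multiplicative.ofAdd.injective this

end Action

section NormalForms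

variable {m : ℕ}

lemma intCast_ne_zero_of_abs_lt {c : ℤ} (h0 : c ≠ 0) (h : |c| < m) : (c : ZMod m) ≠ 0 :=
  fun h' => h0 (Int.eq_zero_of_abs_lt_dvd ((ZMod.intCast_zmod_eq_zero_iff_dvd c m).1 h') h)

lemma abs_sgn_mul (s : Bool) (l : ℕ) : |sgn s * l| = l := by
  cases s <;> simp [sgn]

lemma Windowless.of_cons {p : Bool × Bool} {v : List (Bool × Bool)}
    (h : Windowless m (p :: v)) : Windowless m v :=
  fun i x s => by simpa using h (i + 1) x s

/-- The normal form of a reduced windowless word, lifted to the integers: its entries are the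
signed lengths of the maximal alternating blocks of constant sign. -/
lemma exists_state_eq_of_windowless (hm : 2 ≤ m) (x s : Bool) (v : List (Bool × Bool))
    (hred : ((x, s) :: v).IsChain NoCancel) (hw : Windowless m ((x, s) :: v)) :
    ∃ (l : ℕ) (T : List ℤ), 1 ≤ l ∧ l < m ∧ ((x, s) :: v).take l = altWord x s l ∧
      state m ((x, s) :: v) =
        (if x = s then 0 :: (sgn s * l) :: T else (sgn s * l) :: T).map (Int.cast) ∧
      (∀ c ∈ T, |c| < m) ∧ sgn s * l + T.sum = exponentSum ((x, s) :: v) ∧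
      ∀ e, (∀ p ∈ (x, s) :: v, p.2 = e) → ∀ c ∈ T, 0 ≤ sgn e * c := by
  induction v generalizing x s with
  | nil =>
    have h1 : ((sgn s : ℤ) : ZMod m) ≠ 0 :=
      intCast_ne_zero_of_abs_lt (by cases s <;> simp [sgn])
        (by cases s <;> simp [sgn] <;> omega)
    by_cases h : x = s
    · refine ⟨1, [], le_rfl, by omega, rfl, ?_, by simp, by simp [exponentSum], by simp⟩
      rw [state_cons, state_nil]
      simp [h, shift, involute]
    · refine ⟨1, [0], le_rfl, by omega, rfl, ?_, by simp; omega, by simp [exponentSum], by simp⟩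
      rw [state_cons, state_nil]
      simp [h, shift, involute]
  | cons q v ih =>
    obtain ⟨y, t⟩ := q
    rw [List.isChain_cons_cons] at hred
    obtain ⟨l, T, hl1, hlm, htake, hstate, hT, hsum, hsign⟩ := ih y t hred.2 hw.of_cons
    have hsgn : ∀ e, (∀ p ∈ (x, s) :: (y, t) :: v, p.2 = e) → ∀ c ∈ T, 0 ≤ sgn e * c :=
      fun e he => hsign e fun p hp => he p (List.mem_cons_of_mem _ hp)
    have hesum : exponentSum ((x, s) :: (y, t) :: v) = sgn s + exponentSum ((y, t) :: v) := by
      simp [exponentSum]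
    by_cases hext : x ≠ y ∧ s = t
    · obtain ⟨hxy, rfl⟩ := hext
      have hyx : (!x) = y := by revert hxy; clear * -; revert x y; decide
      have htake' : ((x, s) :: (y, s) :: v).take (l + 1) = altWord x s (l + 1) := by
        rw [List.take_succ_cons, htake, altWord, hyx]
      have hlm' : l + 1 < m := by
        refine lt_of_le_of_ne hlm fun h => hw 0 x s ?_
        rw [← h]; exact htake'
      have hne : ((sgn s * (l + 1 : ℕ) : ℤ) : ZMod m) ≠ 0 :=
        intCast_ne_zero_of_abs_lt (by cases s <;> simp [sgn] <;> omega)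
          (by rw [abs_sgn_mul]; exact_mod_cast hlm')
      have hcast : ((sgn s : ℤ) : ZMod m) + ((sgn s * l : ℤ) : ZMod m) =
          ((sgn s * (l + 1 : ℕ) : ℤ) : ZMod m) := by push_cast; ring
      refine ⟨l + 1, T, by omega, hlm', htake', ?_, hT, ?_, hsgn⟩
      · rw [state_cons, hstate]
        by_cases h : x = s
        · have h' : y ≠ s := fun h' => hxy (h.trans h'.symm)
          simp only [h, h', if_true, if_false, List.map_cons, shift, hcast]
          rw [involute_cons_of_ne _ _ hne, Int.cast_zero]
        · have h' : y = s := by revert hxy h; clear * -; revert x y s; decide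
          simp only [h, h', if_true, if_false, List.map_cons, Int.cast_zero,
            involute_cons_zero, shift, hcast]
      · rw [hesum, ← hsum]; push_cast; ring
    · have hflag : x = s ↔ y = t := by
        have := hred.1
        simp only [NoCancel] at this
        revert this hext; clear * -; revert x y s t; decide
      have hs : ((sgn s : ℤ) : ZMod m) ≠ 0 :=
        intCast_ne_zero_of_abs_lt (by cases s <;> simp [sgn])
          (by cases s <;> simp [sgn] <;> omega)
      have hne : ((sgn t * l : ℤ) : ZMod m) ≠ 0 :=
        intCast_ne_zero_of_abs_lt (by cases t <;> simp [sgn] <;> omega)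
          (by rw [abs_sgn_mul]; exact_mod_cast hlm)
      refine ⟨1, (sgn t * l) :: T, le_rfl, by omega, rfl, ?_, ?_, ?_, ?_⟩
      · rw [state_cons, hstate]
        by_cases h : y = t
        · simp only [hflag.2 h, h, if_true, List.map_cons, Int.cast_zero, shift, add_zero,
            Nat.cast_one, mul_one]
          rw [involute_cons_of_ne _ _ hs]
        · simp only [mt hflag.1 h, h, if_false, List.map_cons, Nat.cast_one, mul_one]
          rw [involute_cons_of_ne _ _ hne, shift, add_zero]
      · intro c hc
        rcases List.mem_cons.1 hc with rfl | hc
        · rw [abs_sgn_mul]; exact_mod_cast hlm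
        · exact hT c hc
      · rw [hesum, ← hsum, List.sum_cons]; push_cast; ring
      · intro e he c hc
        rcases List.mem_cons.1 hc with rfl | hc
        · rw [← he (y, t) (by simp), ← mul_assoc, sgn_mul_self]; positivity
        · exact hsgn e he c hc

/-- The normal form of a reduced windowless word lifts to a list of small integers. -/
lemma exists_lift_of_windowless (hm : 2 ≤ m) (v : List (Bool × Bool))
    (hred : v.IsChain NoCancel) (hw : Windowless m v) :
    ∃ C : List ℤ, state m v = C.map Int.cast ∧ (∀ c ∈ C, |c| < m) ∧ C.sum = exponentSum v ∧
      ∀ e, (∀ p ∈ v, p.2 = e) → ∀ c ∈ C, 0 ≤ sgn e * c := by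
  cases v with
  | nil => exact ⟨[0], by simp [state_nil], by simp; omega, by simp [exponentSum], by simp⟩
  | cons p v =>
    obtain ⟨x, s⟩ := p
    obtain ⟨l, T, hl1, hlm, -, hstate, hT, hsum, hsign⟩ :=
      exists_state_eq_of_windowless hm x s v hred hw
    have habs : |sgn s * l| < m := by rw [abs_sgn_mul]; exact_mod_cast hlm
    have hs : ∀ e, (∀ p ∈ (x, s) :: v, p.2 = e) → 0 ≤ sgn e * (sgn s * l) := fun e he => by
      rw [← he (x, s) (by simp), ← mul_assoc, sgn_mul_self]; positivity
    refine ⟨_, hstate, ?_, ?_, ?_⟩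
    · split_ifs <;> simp_all
      omega
    · split_ifs <;> simp_all
    · intro e he
      have h1 := hs e he
      have h2 := hsign e he
      split_ifs
      · exact List.forall_mem_cons.2 ⟨by simp, List.forall_mem_cons.2 ⟨h1, h2⟩⟩
      · exact List.forall_mem_cons.2 ⟨h1, h2⟩

/-- A nonempty reduced windowless word acts nontrivially. -/
lemma wordPerm_ne_one_of_windowless (hm : 2 ≤ m) {v : List (Bool × Bool)} (hne : v ≠ [])
    (hred : v.IsChain NoCancel) (hw : Windowless m v) : wordPerm m v ≠ 1 := by
  intro h
  have h0 : state m v = [0] := by rw [state, h]; rfl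
  obtain ⟨p, v, rfl⟩ := List.exists_cons_of_ne_nil hne
  obtain ⟨x, s⟩ := p
  obtain ⟨l, T, hl1, hlm, -, hstate, -⟩ := exists_state_eq_of_windowless hm x s v hred hw
  have hl : ((sgn s * l : ℤ) : ZMod m) ≠ 0 :=
    intCast_ne_zero_of_abs_lt (by cases s <;> simp [sgn] <;> omega)
      (by rw [abs_sgn_mul]; exact_mod_cast hlm)
  rw [h0] at hstate
  split_ifs at hstate
  · simp at hstate
  · simp only [List.map_cons, List.cons.injEq] at hstate
    exact hl hstate.1.symm

lemma map_involute {C : List ℤ} (h : ∀ c ∈ C, |c| < m) :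
    involute (C.map (Int.cast : ℤ → ZMod m)) = (involute C).map Int.cast := by
  match C with
  | [] => rfl
  | [c] => simp [involute]
  | c :: d :: t =>
    by_cases hc : c = 0
    · simp [involute, hc]
    · have := intCast_ne_zero_of_abs_lt hc (h c (by simp))
      simp [involute, hc, this]

lemma sum_involute (C : List ℤ) : (involute C).sum = C.sum := by
  match C with
  | [] => rfl
  | [c] => simp [involute]
  | c :: d :: t => by_cases hc : c = 0 <;> simp [involute, hc]

lemma mem_involute {C : List ℤ} {c : ℤ} (h : c ∈ involute C) : c = 0 ∨ c ∈ C := by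
  match C with
  | [] => simp [involute] at h
  | [d] => simpa [involute] using h
  | d :: e :: t =>
    simp only [involute] at h
    split_ifs at h
    · exact Or.inr (List.mem_cons_of_mem _ h)
    · simpa using h

lemma sgn_mul_sum_le (e : Bool) {C D : List ℤ}
    (h : C.map (Int.cast : ℤ → ZMod m) = D.map Int.cast) (hC : ∀ c ∈ C, |c| < m)
    (hD : ∀ d ∈ D, |d| < m) (hD0 : ∀ d ∈ D, 0 ≤ sgn e * d) :
    sgn e * C.sum ≤ sgn e * D.sum := by
  induction C generalizing D with
  | nil =>
    cases D with
    | nil => rfl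
    | cons d D => simp at h
  | cons c C ih =>
    cases D with
    | nil => simp at h
    | cons d D =>
      simp only [List.map_cons, List.cons.injEq] at h
      simp only [List.forall_mem_cons] at hC hD hD0
      have h1 := ih h.2 hC.2 hD.2 hD0.2
      have h2 : sgn e * c ≤ sgn e * d := by
        obtain ⟨k, hk⟩ := (ZMod.intCast_eq_intCast_iff_dvd_sub c d m).1 h.1
        have a1 := abs_lt.1 hC.1
        have a2 := abs_lt.1 hD.1
        have a3 := hD0.1
        have hm0 : (0 : ℤ) < m := by linarith [abs_nonneg c, hC.1]
        cases e
        · simp only [sgn, Bool.false_eq_true, if_false] at a3 ⊢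
          have : k < 1 := by
            by_contra hk1
            nlinarith
          nlinarith
        · simp only [sgn, if_true] at a3 ⊢
          have : -1 < k := by
            by_contra hk1
            nlinarith
          nlinarith
      simp only [List.sum_cons, mul_add]
      exact add_le_add h2 h1

/-- A reduced windowless word cannot represent the product of the Garside element, taken with
sign `e`, and a reduced windowless word all of whose letters have sign `e`. -/
lemma exponentSum_ne_of_wordPerm_eq (hm : 2 ≤ m) (e : Bool) {v w : List (Bool × Bool)}
    (hv : v.IsChain NoCancel) (hvw : Windowless m v)
    (hw : w.IsChain NoCancel) (hww : Windowless m w) (hwe : ∀ p ∈ w, p.2 = e)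
    (h : wordPerm m v = sigma (ZMod m) ^ m * wordPerm m w) :
    exponentSum v ≠ m * sgn e + exponentSum w := by
  intro hs
  obtain ⟨C, hC, hCabs, hCsum, -⟩ := exists_lift_of_windowless hm v hv hvw
  obtain ⟨D, hD, hDabs, hDsum, hDsgn⟩ := exists_lift_of_windowless hm w hw hww
  have hpow : ∃ D' : List ℤ, state m v = D'.map Int.cast ∧ (∀ c ∈ D', |c| < m) ∧
      D'.sum = exponentSum w ∧ ∀ c ∈ D', 0 ≤ sgn e * c := by
    rcases Nat.even_or_odd' m with ⟨k, hk | hk⟩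
    · have : sigma (ZMod m) ^ m = 1 := by
        rw [show sigma (ZMod m) ^ m = (sigma (ZMod m) ^ 2) ^ k by rw [← pow_mul, ← hk], pow_two,
          sigma_mul_self, one_pow]
      rw [this, one_mul] at h
      exact ⟨D, by rw [state, h]; exact hD, hDabs, hDsum, hDsgn e hwe⟩
    · have : sigma (ZMod m) ^ m = sigma (ZMod m) := by
        rw [show sigma (ZMod m) ^ m = (sigma (ZMod m) ^ 2) ^ k * sigma (ZMod m) by
          rw [← pow_mul, ← pow_succ, ← hk], pow_two, sigma_mul_self, one_pow, one_mul]
      rw [this] at h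
      refine ⟨involute D, ?_, fun c hc => ?_, by rw [sum_involute, hDsum], fun c hc => ?_⟩
      · rw [← map_involute hDabs, ← hD, state, h]; rfl
      · rcases mem_involute hc with rfl | hc
        · simp; omega
        · exact hDabs c hc
      · rcases mem_involute hc with rfl | hc
        · simp
        · exact hDsgn e hwe c hc
  obtain ⟨D', hD', hDabs', hDsum', hDsgn'⟩ := hpow
  have hle := sgn_mul_sum_le e (hC.symm.trans hD') hCabs hDabs' hDsgn'
  rw [hCsum, hDsum', hs, mul_add, mul_left_comm, sgn_mul_self] at hle
  omega

end NormalForms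

section CyclicWords

lemma noCancel_comm {p q : Bool × Bool} (h : NoCancel p q) : NoCancel q p :=
  fun h' => h ⟨h'.1.symm, h'.2.symm⟩

lemma exists_eq_replicate_append (p : Bool × Bool) (v : List (Bool × Bool))
    (h : (p :: v).IsChain NoCancel) :
    ∃ k v', v = List.replicate k p ++ v' ∧ ∀ q ∈ v'.head?, q.1 ≠ p.1 := by
  induction v with
  | nil => exact ⟨0, [], by simp⟩
  | cons q v ih =>
    rw [List.isChain_cons_cons] at h
    by_cases hq : q.1 = p.1
    · have hqp : q = p := by
        refine Prod.ext hq ?_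
        by_contra h2
        exact h.1 ⟨hq.symm, fun h3 => h2 h3.symm⟩
      subst hqp
      obtain ⟨k, v', hv, hh⟩ := ih h.2
      exact ⟨k + 1, v', by rw [List.replicate_succ, List.cons_append, ← hv], hh⟩
    · exact ⟨0, q :: v, by simp, by simpa using hq⟩

lemma exists_eq_append_replicate (p : Bool × Bool) (v : List (Bool × Bool))
    (h : (v ++ [p]).IsChain NoCancel) :
    ∃ k v', v = v' ++ List.replicate k p ∧ ∀ q ∈ v'.getLast?, q.1 ≠ p.1 := by
  have h' : (p :: v.reverse).IsChain NoCancel := by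
    rw [← List.isChain_reverse]
    simpa using h.imp fun _ _ => noCancel_comm
  obtain ⟨k, v', hv, hh⟩ := exists_eq_replicate_append p v.reverse h'
  refine ⟨k, v'.reverse, ?_, by simpa using hh⟩
  rw [← List.reverse_reverse v, hv, List.reverse_append, List.reverse_replicate]

lemma isChain_replicate_append (k l : ℕ) (x s : Bool) :
    (List.replicate k (!x, s) ++ List.replicate l (x, s)).IsChain NoCancel := by
  have h : ∀ p ∈ List.replicate k (!x, s) ++ List.replicate l (x, s), p.2 = s := by
    simp +contextual [or_imp]
  exact (List.pairwise_of_forall_mem_list fun p hp q hq hpq =>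
    hpq.2 ((h p hp).trans (h q hq).symm)).isChain

lemma getElem?_of_take_drop_eq {L : List (Bool × Bool)} {m i r : ℕ} {x s : Bool}
    (h : (L.drop i).take m = altWord x s m) (hr : r < m) :
    L[i + r]? = some (xor x r.bodd, s) := by
  have h' := congrArg (·[r]?) h
  simp only [List.getElem?_take, hr, if_true, List.getElem?_drop] at h'
  rw [h', List.getElem?_eq_getElem (by rwa [length_altWord]), getElem_altWord]

lemma windowless_replicate_append {m : ℕ} (hm : 3 ≤ m) (k l : ℕ) (x s : Bool) :
    Windowless m (List.replicate k (!x, s) ++ List.replicate l (x, s)) := by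
  intro i y t h
  have h0 := getElem?_of_take_drop_eq h (show 0 < m by omega)
  have h1 := getElem?_of_take_drop_eq h (show 1 < m by omega)
  have h2 := getElem?_of_take_drop_eq h (show 2 < m by omega)
  simp only [List.getElem?_append, List.length_replicate, List.getElem?_replicate] at h0 h1 h2
  clear h
  split_ifs at h0 h1 h2 <;> first | omega | (cases x <;> cases y <;> simp at h0 h1 h2)

lemma wordPerm_rotate_eq_one_iff (m : ℕ) {u : List (Bool × Bool)} {i : ℕ} (hi : i ≤ u.length) :
    wordPerm m (u.rotate i) = 1 ↔ wordPerm m u = 1 := by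
  rw [List.rotate_eq_drop_append_take hi, wordPerm_append, mul_eq_one_iff_eq_inv,
    ← mul_eq_one_iff_eq_inv', ← wordPerm_append, List.take_append_drop]

lemma exponentSum_rotate (u : List (Bool × Bool)) (i : ℕ) :
    exponentSum (u.rotate i) = exponentSum u :=
  ((List.rotate_perm u i).map _).sum_eq

lemma wordPerm_replicate (m k : ℕ) (p : Bool × Bool) :
    wordPerm m (List.replicate k p) = letterPerm m p ^ k := by
  simp [wordPerm]

lemma sigma_pow_mul_self (R : Type*) [AddCommGroup R] [DecidableEq R] (n : ℕ) :
    sigma R ^ n * sigma R ^ n = 1 := by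
  rw [← (Commute.refl (sigma R)).mul_pow, sigma_mul_self, one_pow]

lemma cgen_of_getElem? {L : List (Bool × Bool)} {i : ℕ} {q : Bool × Bool}
    (h : L[i]? = some q) : cgen L i = q.1 := by
  obtain ⟨hi, rfl⟩ := List.getElem?_eq_some_iff.1 h
  rw [cgen, Nat.mod_eq_of_lt hi, List.getD_eq_getElem _ _ hi]

lemma cgen_of_take_drop_eq {L : List (Bool × Bool)} {m i r : ℕ} {x s : Bool}
    (h : (L.drop i).take m = altWord x s m) (hr : r < m) : cgen L (i + r) = xor x r.bodd :=
  cgen_of_getElem? (getElem?_of_take_drop_eq h hr)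

lemma cgen_of_eq_append {L P Q : List (Bool × Bool)} {q : Bool × Bool} {i : ℕ}
    (h : L = P ++ q :: Q) (hi : i = P.length) : cgen L i = q.1 := by
  subst h hi
  exact cgen_of_getElem? (by simp)

/-- Two alternating windows of length `m`, at positions `0` and `j` of a cyclic word, share no
syllable as soon as the generator changes between them in both directions: at position `c`
after the first window and at position `d` after the second one. -/
lemma not_constArc_of_windows {L : List (Bool × Bool)} {m j c d : ℕ}
    (hmc : m ≤ c) (hcj : c ≤ j) (hjd : j + m ≤ d + 1) (hdL : d < L.length)
    (h₁ : ∀ r, r + 1 < m → cgen L r ≠ cgen L (r + 1))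
    (h₂ : ∀ r, r + 1 < m → cgen L (j + r) ≠ cgen L (j + r + 1))
    (hc : cgen L c ≠ cgen L (m - 1)) (hd : cgen L d ≠ cgen L 0) (p q : ℕ)
    (hp : p < m ∨ j ≤ p ∧ p < j + m) (hq : q < m ∨ j ≤ q ∧ q < j + m) (hpq : p ≠ q) :
    ¬ ConstArc L p q := by
  rintro ⟨t, ht, hqt, harc⟩
  rw [Nat.mod_eq_of_lt (show q < L.length by omega)] at hqt
  have hq' : p + t < L.length → q = p + t := fun h => by rwa [Nat.mod_eq_of_lt h] at hqt
  have ht0 : t ≠ 0 := by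
    rintro rfl
    exact hpq (hq' (by omega)).symm
  have hstep := harc 1 (by omega)
  rcases hp with hp | ⟨hp, hp'⟩
  · by_cases hpm : p + 1 < m
    · exact h₁ p hpm hstep.symm
    · have hpe : p = m - 1 := by omega
      have hct : c - p ≤ t := by
        by_contra hlt
        have := hq' (by omega)
        omega
      have := harc (c - p) hct
      rw [show p + (c - p) = c by omega, hpe] at this
      exact hc this
  · by_cases hpm : p - j + 1 < m
    · have := h₂ (p - j) hpm
      rw [show j + (p - j) = p by omega] at this
      exact this hstep.symm
    · have hct : L.length - p ≤ t := by
        by_contra hlt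
        have := hq' (by omega)
        omega
      have e₁ := harc (L.length - p) hct
      have e₂ := harc (d - p) (by omega)
      rw [show p + (L.length - p) = L.length by omega] at e₁
      rw [show p + (d - p) = d by omega, ← e₁] at e₂
      exact hd (e₂.trans (by simp [cgen]))

end CyclicWords

end DihedralArtin

open DihedralArtin

/-- Let `m ≥ 3` and let `u` be a nonempty cyclically reduced word in `a^{±1}`,
`b^{±1}` representing the identity of the dihedral Artin group
`A_m = ⟨a, b | p_m(a,b) = p_m(b,a)⟩`. Then, possibly after replacing `u` by a
cyclic permutation, `u` contains two disjoint subwords `w₁`, `w₂`, each equal to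
one of `p_m(a,b)`, `p_m(a,b)⁻¹`, `p_m(b,a)`, `p_m(b,a)⁻¹`, such that no two of
the letters of `w₁` and `w₂` lie in the same syllable of `u` nor in the same
syllable of any cyclic permutation of `u`. -/
theorem dihedral_artin_corner_lemma (m : ℕ) (hm : 3 ≤ m)
    (u : List (Bool × Bool)) (hne : u ≠ [])
    (hred : CyclicallyReduced u)
    (htriv : FreeGroup.mk u ∈ Subgroup.normalClosure
      {FreeGroup.mk (altL false m) * (FreeGroup.mk (altL true m))⁻¹}) :
    ∃ k i₁ i₂ : ℕ, i₁ + m ≤ i₂ ∧ i₂ + m ≤ u.length ∧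
      ((u.rotate k).drop i₁).take m ∈ pmWords m ∧
      ((u.rotate k).drop i₂).take m ∈ pmWords m ∧
      ∀ p q : ℕ,
        ((i₁ ≤ p ∧ p < i₁ + m) ∨ (i₂ ≤ p ∧ p < i₂ + m)) →
        ((i₁ ≤ q ∧ q < i₁ + m) ∨ (i₂ ≤ q ∧ q < i₂ + m)) →
        p ≠ q → ¬ SameCyclicSyllable (u.rotate k) p q := by
  obtain ⟨i, x, s, hi⟩ : ∃ i x s, (u.drop i).take m = altWord x s m := by
    by_contra! h
    exact wordPerm_ne_one_of_windowless (by omega) hne (List.rotate_zero u ▸ hred 0) h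
      (wordPerm_eq_one_of_mem m htriv)
  have hilen : i ≤ u.length := by
    have h := congrArg List.length hi
    rw [length_altWord, List.length_take, List.length_drop] at h
    omega
  obtain ⟨v, hv⟩ : ∃ v, u.rotate i = altWord x s m ++ v := by
    refine ⟨(u.drop i).drop m ++ u.take i, ?_⟩
    rw [← hi, ← List.append_assoc, List.take_append_drop, List.rotate_eq_drop_append_take hilen]
  have hv' : u.rotate (i + m) = v ++ altWord x s m := by
    have h := List.rotate_append_length_eq (altWord x s m) v
    rwa [length_altWord, ← hv, List.rotate_rotate] at h
  have hlen : u.length = m + v.length := by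
    rw [← List.length_rotate u i, hv, List.length_append, length_altWord]
  have hone : wordPerm m (altWord x s m ++ v) = 1 := by
    rw [← hv, wordPerm_rotate_eq_one_iff m hilen]
    exact wordPerm_eq_one_of_mem m htriv
  have hsum : exponentSum (altWord x s m ++ v) = 0 := by
    rw [← hv, exponentSum_rotate]
    exact exponentSum_eq_zero_of_mem m htriv
  obtain ⟨n, rfl⟩ : ∃ n, m = n + 1 := ⟨m - 1, by omega⟩
  have hchain : ((xor x n.bodd, s) :: v).IsChain NoCancel := by
    have h : (u.rotate i).IsChain NoCancel := hred i
    rw [hv, altWord_succ_eq_append, List.append_assoc] at h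
    exact h.suffix (List.suffix_append _ _)
  have hchain' : (v ++ [(x, s)]).IsChain NoCancel := by
    have h : (u.rotate (i + (n + 1))).IsChain NoCancel := hred _
    rw [hv', altWord] at h
    rw [← List.singleton_append, ← List.append_assoc] at h
    exact h.left_of_append
  obtain ⟨k, v₁, rfl, hhead⟩ := exists_eq_replicate_append _ v hchain
  obtain ⟨l, v₂, rfl, hlast⟩ := exists_eq_append_replicate (x, s) v₁
    (hchain'.suffix ⟨List.replicate k (xor x n.bodd, s), by simp⟩)
  by_cases hw : Windowless (n + 1) v₂
  · exfalso
    have hv₂ : v₂.IsChain NoCancel := hchain.of_cons.right_of_append.left_of_append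
    have hxn : xor (xor x n.bodd) (n + 1).bodd = !x := by cases x <;> simp
    refine exponentSum_ne_of_wordPerm_eq (m := n + 1) (by omega) (!s) hv₂ hw
      (isChain_replicate_append k l x (!s)) (windowless_replicate_append hm k l x (!s))
      (by simp +contextual [or_imp]) ?_ ?_
    · have hinv := sigma_pow_mul_self (ZMod (n + 1)) (n + 1)
      have hconj := SemiconjBy.pow_right
        (letterPerm_mul_sigma_pow (n + 1) (xor x n.bodd) (!s) (n + 1)).symm k
      rw [hxn] at hconj
      simp only [wordPerm_append, wordPerm_altWord_self, wordPerm_replicate] at hone ⊢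
      rw [← mul_assoc, hconj.eq, letterPerm_not, letterPerm_not, inv_pow, inv_pow,
        eq_mul_inv_iff_mul_eq, eq_inv_mul_iff_mul_eq,
        ← mul_left_cancel_iff (a := sigma (ZMod (n + 1)) ^ (n + 1)), hinv]
      simpa only [mul_assoc] using hone
    · simp only [exponentSum_append, exponentSum_altWord, exponentSum_replicate, sgn_not]
        at hsum ⊢
      linarith
  · simp only [Windowless, not_forall, not_not] at hw
    obtain ⟨j, y, t, hj⟩ := hw
    have hjlen : j + (n + 1) ≤ v₂.length := by
      have h := congrArg List.length hj
      rw [length_altWord, List.length_take, List.length_drop] at h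
      omega
    have hwin₁ : ((u.rotate i).drop 0).take (n + 1) = altWord x s (n + 1) := by
      rw [hv, List.drop_zero]
      exact List.take_left' (length_altWord _ _ _)
    have hwin₂ : ((u.rotate i).drop (n + 1 + k + j)).take (n + 1) = altWord y t (n + 1) := by
      have h : (u.rotate i).drop (n + 1 + k) = v₂ ++ List.replicate l (x, s) := by
        rw [hv, ← List.append_assoc]
        exact List.drop_left' (by simp [length_altWord])
      rw [← List.drop_drop, h, List.drop_append_of_le_length (by omega),
        List.take_append_of_le_length (by rw [List.length_drop]; omega), hj]
    have hv₂ : v₂ ≠ [] := by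
      rintro rfl
      simp at hjlen
    simp only [List.length_append, List.length_replicate] at hlen
    refine ⟨i, 0, n + 1 + k + j, by omega, by omega, ?_, ?_, ?_⟩
    · rw [hwin₁]; exact (mem_pmWords_iff _ _).2 ⟨x, s, rfl⟩
    · rw [hwin₂]; exact (mem_pmWords_iff _ _).2 ⟨y, t, rfl⟩
    have hg₁ : ∀ r < n + 1, cgen (u.rotate i) r = xor x r.bodd := fun r hr => by
      have := cgen_of_take_drop_eq hwin₁ hr
      rwa [zero_add] at this
    have hg₂ : ∀ r < n + 1, cgen (u.rotate i) (n + 1 + k + j + r) = xor y r.bodd :=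
      fun r hr => cgen_of_take_drop_eq hwin₂ hr
    have hstart : cgen (u.rotate i) (n + 1 + k) ≠ cgen (u.rotate i) n := by
      obtain ⟨q, v₃, rfl⟩ := List.exists_cons_of_ne_nil hv₂
      rw [hg₁ n (by omega), cgen_of_eq_append (P := altWord x s (n + 1) ++
        List.replicate k (xor x n.bodd, s)) (q := q) (Q := v₃ ++ List.replicate l (x, s))
        (by rw [hv]; simp) (by simp [length_altWord])]
      exact hhead q (by simp)
    have hend : cgen (u.rotate i) (n + k + v₂.length) ≠ cgen (u.rotate i) 0 := by
      rw [hg₁ 0 (by omega), cgen_of_eq_append (P := altWord x s (n + 1) ++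
        List.replicate k (xor x n.bodd, s) ++ v₂.dropLast) (q := v₂.getLast hv₂)
        (Q := List.replicate l (x, s))]
      · simpa using hlast _ (List.getLast_mem_getLast? hv₂)
      · rw [hv]
        conv_lhs => rw [← List.dropLast_append_getLast hv₂]
        simp
      · have := List.length_pos_iff.2 hv₂
        simp [length_altWord]; omega
    intro p q hp hq hpq
    have hlenr : (u.rotate i).length = u.length := List.length_rotate u i
    have key := not_constArc_of_windows (L := u.rotate i) (m := n + 1) (j := n + 1 + k + j)
      (c := n + 1 + k) (d := n + k + v₂.length) (by omega) (by omega) (by omega) (by omega)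
      (fun r hr => by rw [hg₁ r (by omega), hg₁ (r + 1) hr]; simp)
      (fun r hr => by rw [add_assoc _ r 1, hg₂ r (by omega), hg₂ (r + 1) hr]; simp)
      hstart hend
    rw [zero_add] at hp hq
    rintro (h | h)
    · exact key p q (hp.imp_left And.right) (hq.imp_left And.right) hpq h
    · exact key q p (hq.imp_left And.right) (hp.imp_left And.right) hpq.symm h
end

section
/- Let (Hᵢ)_{i∈ℕ} be a sequence of groups together with surjective group homomorphisms fᵢ : Hᵢ → Hᵢ₊₁ for every i. Suppose there exists a Hopfian group H such that Hᵢ is isomorphic to H for infinitely many indices i. Then there exists N such that fᵢ is a group isomorphism for every i ≥ N. -/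
/-- A group is Hopfian if every surjective group endomorphism is injective. -/
def IsHopfianGroup (G : Type*) [Group G] : Prop :=
  ∀ φ : G →* G, Function.Surjective φ → Function.Injective φ

/-- In a sequence of groups with surjective transition homomorphisms, every group
surjects onto each later one. -/
theorem exists_surjective_monoidHom_of_le {H : ℕ → Type*} [∀ i, Group (H i)]
    (f : ∀ i : ℕ, H i →* H (i + 1)) (hf : ∀ i, Function.Surjective (f i))
    {i j : ℕ} (hij : i ≤ j) : ∃ g : H i →* H j, Function.Surjective g := by
  induction j, hij using Nat.le_induction with
  | base => exact ⟨MonoidHom.id _, Function.surjective_id⟩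
  | succ j _ ih =>
    obtain ⟨g, hg⟩ := ih
    exact ⟨(f j).comp g, (hf j).comp hg⟩

/-- A surjective homomorphism between two groups isomorphic to a Hopfian group is injective. -/
theorem IsHopfianGroup.injective_of_surjective {G A B : Type*} [Group G] [Group A] [Group B]
    (hG : IsHopfianGroup G) (a : A ≃* G) (b : B ≃* G) (φ : A →* B)
    (hφ : Function.Surjective φ) : Function.Injective φ := by
  have h : Function.Injective (b ∘ φ ∘ a.symm) :=
    hG ((b.toMonoidHom.comp φ).comp a.symm.toMonoidHom)
      (b.surjective.comp (hφ.comp a.symm.surjective))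
  exact (Function.Injective.of_comp h).of_comp_right a.symm.surjective

/-- Given a sequence of groups `Hᵢ` with surjective homomorphisms
`fᵢ : Hᵢ → Hᵢ₊₁`, if there is a Hopfian group `H` with `Hᵢ ≅ H` for infinitely
many `i`, then the sequence eventually consists of isomorphisms. -/
theorem epimorphism_sequence_stabilises {H : ℕ → Type*} [∀ i, Group (H i)]
    (f : ∀ i : ℕ, H i →* H (i + 1)) (hf : ∀ i, Function.Surjective (f i))
    (H₀ : Type*) [Group H₀] (hHopf : IsHopfianGroup H₀)
    (hinf : {i : ℕ | Nonempty (H i ≃* H₀)}.Infinite) :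
    ∃ N : ℕ, ∀ i ≥ N, Function.Bijective (f i) := by
  obtain ⟨N, ⟨a⟩⟩ := hinf.nonempty
  refine ⟨N, fun i hi => ⟨?_, hf i⟩⟩
  obtain ⟨m, ⟨b⟩, hm⟩ := hinf.exists_gt i
  obtain ⟨g, hg⟩ := exists_surjective_monoidHom_of_le f hf hi
  obtain ⟨k, hk⟩ := exists_surjective_monoidHom_of_le f hf (Nat.succ_le_of_lt hm)
  have h : Function.Injective (k ∘ f i ∘ g) :=
    hHopf.injective_of_surjective a b ((k.comp (f i)).comp g) (hk.comp ((hf i).comp hg))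
  exact (Function.Injective.of_comp h).of_comp_right hg
end
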